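/- Let A : ℝ³ → ℝ³ be a smooth vector potential with magnetic field B = ∇×A, let q ∈ ℝ³ with B(q) ≠ 0, and let (b, c, d) be a direct orthonormal basis with b = B(q)/‖B(q)‖. Let Q be the symmetric bilinear form on ℝ³×ℝ³ defined by Q((U₁,V₁),(U₂,V₂)) = 2⟨V₁ − DA(q)U₁, V₂ − DA(q)U₂⟩ (the Hessian of H(q,p) = ‖p−A(q)‖² at (q,A(q))). Set f₄ = ‖B(q)‖^{-1/2}(c, DA(q)ᵀc), f₅ = ‖B(q)‖^{-1/2}(d, DA(q)ᵀd) and f₆ = (W, b + DA(q)W) for an arbitrary W ∈ ℝ³. Then Q(f₄,f₄) = Q(f₅,f₅) = 2‖B(q)‖, Q(f₄,f₅) = 0, Q(f₄,f₆) = Q(f₅,f₆) = 0 and Q(f₆,f₆) = 2; moreover Q((U, DA(q)U), X) = 0 for every U ∈ ℝ³ and every X ∈ ℝ³×ℝ³ (the Hessian vanishes on tangent vectors to Σ). -/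

import Mathlib

open Matrix

noncomputable section

/-- The curl `∇ × A` of a vector field on `ℝ³`. -/
def curl (A : (Fin 3 → ℝ) → (Fin 3 → ℝ)) (q : Fin 3 → ℝ) : Fin 3 → ℝ :=
  ![fderiv ℝ (fun x => A x 2) q (Pi.single 1 1) - fderiv ℝ (fun x => A x 1) q (Pi.single 2 1),
    fderiv ℝ (fun x => A x 0) q (Pi.single 2 1) - fderiv ℝ (fun x => A x 2) q (Pi.single 0 1),
    fderiv ℝ (fun x => A x 1) q (Pi.single 0 1) - fderiv ℝ (fun x => A x 0) q (Pi.single 1 1)]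

/-- The Euclidean norm on `ℝ³` (as `Fin 3 → ℝ`). -/
def norm3 (v : Fin 3 → ℝ) : ℝ := Real.sqrt (v ⬝ᵥ v)

/-- The canonical symplectic form on `ℝ⁶ = ℝ³ × ℝ³`:
`ω₀((u₁,u₂),(v₁,v₂)) = ⟨v₁,u₂⟩ − ⟨v₂,u₁⟩`. -/
def omega0 (u v : (Fin 3 → ℝ) × (Fin 3 → ℝ)) : ℝ :=
  v.1 ⬝ᵥ u.2 - v.2 ⬝ᵥ u.1

/-- The adjoint (transpose with respect to the Euclidean dot product) of a continuous
linear map `ℝ³ → ℝ³`. -/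
def adjoint3 (L : (Fin 3 → ℝ) →L[ℝ] (Fin 3 → ℝ)) (w : Fin 3 → ℝ) : Fin 3 → ℝ :=
  fun i => (L (Pi.single i 1)) ⬝ᵥ w

/-- The Hessian of the magnetic Hamiltonian `H(q,p) = ‖p − A(q)‖²` at `(q, A(q))`:
`Q((U₁,V₁),(U₂,V₂)) = 2⟨V₁ − DA(q)U₁, V₂ − DA(q)U₂⟩`. -/
def hessQ (A : (Fin 3 → ℝ) → (Fin 3 → ℝ)) (q : Fin 3 → ℝ)
    (x y : (Fin 3 → ℝ) × (Fin 3 → ℝ)) : ℝ :=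
  2 * ((x.2 - fderiv ℝ A q x.1) ⬝ᵥ (y.2 - fderiv ℝ A q y.1))

/-- `(DAᵀ - DA) v = v × B`. -/
lemma adjoint_sub_eq_cross (A : (Fin 3 → ℝ) → (Fin 3 → ℝ)) (q : Fin 3 → ℝ)
    (hA : DifferentiableAt ℝ A q) (v : Fin 3 → ℝ) :
    adjoint3 (fderiv ℝ A q) v - fderiv ℝ A q v = crossProduct v (curl A q) := by
  have hcomp : ∀ (i : Fin 3) (u : Fin 3 → ℝ),
      fderiv ℝ (fun x => A x i) q u = fderiv ℝ A q u i := by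
    intro i u
    have h := (hasFDerivAt_pi'.1 hA.hasFDerivAt i).fderiv
    rw [h]
    rfl
  have hv : v = v 0 • Pi.single (0 : Fin 3) (1 : ℝ) + v 1 • Pi.single (1 : Fin 3) (1 : ℝ)
      + v 2 • Pi.single (2 : Fin 3) (1 : ℝ) := by
    ext i
    fin_cases i <;> simp
  have hL : fderiv ℝ A q v = v 0 • fderiv ℝ A q (Pi.single 0 1)
      + v 1 • fderiv ℝ A q (Pi.single 1 1) + v 2 • fderiv ℝ A q (Pi.single 2 1) := by
    conv_lhs => rw [hv]
    simp only [map_add, map_smul]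
  rw [hL, cross_apply]
  unfold curl
  simp only [hcomp]
  ext i
  fin_cases i <;> simp [adjoint3, dotProduct, Fin.sum_univ_three] <;> ring

/-- Diagonalization of the Hessian of `H` at `(q,A(q))` in the frame
`f₄ = ‖B‖^{-1/2}(c, DA ᵀc)`, `f₅ = ‖B‖^{-1/2}(d, DA ᵀd)`, `f₆ = (W, b + DA W)`:
`Q(f₄,f₄) = Q(f₅,f₅) = 2‖B(q)‖`, the off-diagonal terms vanish, `Q(f₆,f₆) = 2`, and `Q`
vanishes on tangent vectors `(U, DA(q)U)` to `Σ`. -/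
theorem statement9 (A : (Fin 3 → ℝ) → (Fin 3 → ℝ)) (hA : ContDiff ℝ (⊤ : ℕ∞) A)
    (q : Fin 3 → ℝ) (hBq : curl A q ≠ 0)
    (b c d : Fin 3 → ℝ) (hb : b = (norm3 (curl A q))⁻¹ • curl A q)
    (hcc : c ⬝ᵥ c = 1) (hdd : d ⬝ᵥ d = 1)
    (hbc : b ⬝ᵥ c = 0) (hbd : b ⬝ᵥ d = 0) (hcd : c ⬝ᵥ d = 0)
    (hdirect : b ⬝ᵥ crossProduct c d = 1)
    (W : Fin 3 → ℝ)
    (f₄ f₅ f₆ : (Fin 3 → ℝ) × (Fin 3 → ℝ))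
    (hf₄ : f₄ = ((norm3 (curl A q)) ^ (-(1 : ℝ)/2)) • (c, adjoint3 (fderiv ℝ A q) c))
    (hf₅ : f₅ = ((norm3 (curl A q)) ^ (-(1 : ℝ)/2)) • (d, adjoint3 (fderiv ℝ A q) d))
    (hf₆ : f₆ = (W, b + fderiv ℝ A q W)) :
    hessQ A q f₄ f₄ = 2 * norm3 (curl A q) ∧
    hessQ A q f₅ f₅ = 2 * norm3 (curl A q) ∧
    hessQ A q f₄ f₅ = 0 ∧
    hessQ A q f₄ f₆ = 0 ∧
    hessQ A q f₅ f₆ = 0 ∧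
    hessQ A q f₆ f₆ = 2 ∧
    ∀ (U : Fin 3 → ℝ) (X : (Fin 3 → ℝ) × (Fin 3 → ℝ)),
      hessQ A q (U, fderiv ℝ A q U) X = 0 := by
  have hdiff : DifferentiableAt ℝ A q := (hA.differentiable (by simp)) q
  have key := adjoint_sub_eq_cross A q hdiff
  set B := curl A q with hB
  set n := norm3 B with hn
  have hBB : 0 < B ⬝ᵥ B := by
    have h0 : B ⬝ᵥ B ≠ 0 := fun h => hBq (dotProduct_self_eq_zero.1 h)
    have h1 : 0 ≤ B ⬝ᵥ B := by
      simp only [dotProduct]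
      exact Finset.sum_nonneg fun i _ => mul_self_nonneg _
    exact lt_of_le_of_ne h1 (Ne.symm h0)
  have hnpos : 0 < n := Real.sqrt_pos.2 hBB
  have hnn : B ⬝ᵥ B = n * n := (Real.mul_self_sqrt hBB.le).symm
  have hBc : B ⬝ᵥ c = 0 := by
    rw [hb, smul_dotProduct, smul_eq_mul] at hbc
    exact (mul_eq_zero.1 hbc).resolve_left (inv_ne_zero hnpos.ne')
  have hBd : B ⬝ᵥ d = 0 := by
    rw [hb, smul_dotProduct, smul_eq_mul] at hbd
    exact (mul_eq_zero.1 hbd).resolve_left (inv_ne_zero hnpos.ne')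
  have hbb : b ⬝ᵥ b = 1 := by
    rw [hb, smul_dotProduct, dotProduct_smul, hnn, smul_eq_mul, smul_eq_mul]
    field_simp
  have hcB : c ⬝ᵥ B = 0 := by rw [dotProduct_comm, hBc]
  have hdB : d ⬝ᵥ B = 0 := by rw [dotProduct_comm, hBd]
  set s := n ^ (-(1 : ℝ) / 2) with hs
  have hss : s * s = n⁻¹ := by
    rw [hs, ← Real.rpow_add hnpos, ← Real.rpow_neg_one]
    norm_num
  have h4 : f₄.2 - fderiv ℝ A q f₄.1 = s • crossProduct c B := by
    rw [hf₄, ← key c]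
    simp [smul_sub]
  have h5 : f₅.2 - fderiv ℝ A q f₅.1 = s • crossProduct d B := by
    rw [hf₅, ← key d]
    simp [smul_sub]
  have h6 : f₆.2 - fderiv ℝ A q f₆.1 = b := by
    rw [hf₆]
    simp
  have hcross : ∀ v : Fin 3 → ℝ, crossProduct v B ⬝ᵥ b = 0 := by
    intro v
    rw [hb, dotProduct_smul, dotProduct_comm, dot_cross_self, smul_zero]
  have hfin : 2 * (s * (s * (n * n))) = 2 * n := by
    rw [← mul_assoc s s, hss]
    field_simp
  refine ⟨?_, ?_, ?_, ?_, ?_, ?_, ?_⟩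
  · simp only [hessQ, h4, smul_dotProduct, dotProduct_smul, cross_dot_cross, smul_eq_mul,
      hcc, hcB, hnn, one_mul, zero_mul, sub_zero, hfin]
  · simp only [hessQ, h5, smul_dotProduct, dotProduct_smul, cross_dot_cross, smul_eq_mul,
      hdd, hdB, hnn, one_mul, zero_mul, sub_zero, hfin]
  · simp only [hessQ, h4, h5, smul_dotProduct, dotProduct_smul, cross_dot_cross, smul_eq_mul,
      hcd, hcB, zero_mul, sub_zero, mul_zero]
  · simp only [hessQ, h4, h6, smul_dotProduct, hcross, smul_zero, mul_zero]
  · simp only [hessQ, h5, h6, smul_dotProduct, hcross, smul_zero, mul_zero]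
  · simp only [hessQ, h6, hbb, mul_one]
  · intro U X
    simp [hessQ]
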